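/- Let κ be a Kunen cardinal and let {X_α : α < κ} be a family of separable Banach spaces. Then the ℓ¹-sum X := (⊕_{α<κ} X_α)_{ℓ¹} satisfies Ba(X_w) = Bo(X), where Bo(X) is the Borel σ-algebra of the norm topology. -/

import Mathlib

/-- The σ-algebra on `ι × ι` generated by all rectangles `A ×ˢ B` with `A, B ⊆ ι`. -/
def productSigma (ι : Type*) : MeasurableSpace (ι × ι) :=
  MeasurableSpace.generateFrom {S : Set (ι × ι) | ∃ A B : Set ι, S = A ×ˢ B}

/-- `|ι|` is a Kunen cardinal. -/
def IsKunen (ι : Type*) : Prop := productSigma ι = ⊤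

/-- The Baire σ-algebra of the weak topology of a normed space `X`: the σ-algebra
generated by all continuous linear functionals on `X`. -/
def BaW (X : Type*) [NormedAddCommGroup X] [NormedSpace ℝ X] : MeasurableSpace X :=
  ⨆ φ : X →L[ℝ] ℝ, MeasurableSpace.comap φ Real.measurableSpace

/-!
The diagonal of `ι × ι` lies in the product σ-algebra, so countably many sets separate the points
of `ι`, i.e. `ι` injects into `ℕ → Bool`. By the Hewitt–Marczewski–Pondiczery theorem, products of
separable spaces over `ι` are then separable. For `ι → ℕ` this yields a countable norming family on
the `ℓ¹`-sum `X`, so that `x ↦ ‖T x‖` is weakly Baire measurable for every operator `T` on `X`.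
Applied to the coordinate projections, this shows that `x ↦ ∑ a, ‖x a‖ • δ_a` is a measurable
kernel from `X` to `ι`. Its null sets are the sets missing the support of `x`, so by Fubini the
projection along that support of a measurable subset of `X × ι` is measurable. The same holds for
finite lists in the support, and `ι × List ι` is again discrete because `ι` is Kunen. Finally, `x`
is a limit of sums of vectors `d k a`, with `d` a dense sequence in `∏ a, X a` and `a` ranging over
a finite list in the support of `x`; hence every open set is weakly Baire measurable.
-/

open MeasureTheory ProbabilityTheory Set TopologicalSpace
open scoped Topology

section CountableSeparation

theorem exists_countable_separating_snd {α β : Type*} [MeasurableSpace α] [MeasurableSpace β]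
    {s : Set (α × β)} (hs : MeasurableSet s) :
    ∃ C : Set (Set β), C.Countable ∧ (∀ t ∈ C, MeasurableSet t) ∧
      ∀ y z, (∀ t ∈ C, y ∈ t ↔ z ∈ t) → ∀ x, (x, y) ∈ s ↔ (x, z) ∈ s := by
  induction s, hs using MeasurableSpace.induction_on_inter generateFrom_prod.symm
    isPiSystem_prod with
  | empty => exact ⟨∅, countable_empty, by simp, by simp⟩
  | basic s hs =>
    obtain ⟨u, -, t, ht, rfl⟩ := hs
    exact ⟨{t}, countable_singleton t, by simpa using ht, fun y z hyz x ↦ by simp [hyz t rfl]⟩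
  | compl s _ ih =>
    obtain ⟨C, hC, hCm, hsep⟩ := ih
    exact ⟨C, hC, hCm, fun y z hyz x ↦ not_congr (hsep y z hyz x)⟩
  | iUnion s _ _ ih =>
    choose C hC hCm hsep using ih
    refine ⟨⋃ n, C n, countable_iUnion hC, fun t ht ↦ ?_, fun y z hyz x ↦ ?_⟩
    · obtain ⟨n, hn⟩ := mem_iUnion.1 ht
      exact hCm n t hn
    · simp only [mem_iUnion]
      exact exists_congr fun n ↦ hsep n y z (fun t ht ↦ hyz t (mem_iUnion_of_mem n ht)) x

theorem countablySeparated_of_measurableEq (α : Type*) [MeasurableSpace α] [MeasurableEq α] :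
    MeasurableSpace.CountablySeparated α := by
  obtain ⟨C, hC, hCm, hsep⟩ := exists_countable_separating_snd (measurableSet_diagonal (α := α))
  exact ⟨⟨C, hC, hCm, fun x _ y _ hxy ↦ (hsep x y hxy x).1 rfl⟩⟩

end CountableSeparation

section SeparableProduct

variable {ι : Type*}

theorem eventually_injOn_restrict {β : Type*} {f : ι → ℕ → β} (hf : Function.Injective f)
    (F : Finset ι) :
    ∀ᶠ m in Filter.atTop, InjOn (fun a (i : Fin m) ↦ f a i) F := by
  simp only [InjOn, Finset.mem_coe]
  refine (Finset.eventually_all F).2 fun a _ ↦ (Finset.eventually_all F).2 fun b _ ↦ ?_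
  by_cases hab : a = b
  · simp [hab]
  obtain ⟨n, hn⟩ := Function.ne_iff.1 (hf.ne hab)
  filter_upwards [Filter.eventually_gt_atTop n] with m hm heq
  exact absurd (congrFun heq ⟨n, hm⟩) hn

theorem denseRange_of_forall_finset_eqOn {K : Type*} {Y : ι → Type*} [∀ a, TopologicalSpace (Y a)]
    {u : K → ∀ a, Y a} (hu : ∀ (F : Finset ι) (g : ∀ a, Y a), ∃ k, ∀ a ∈ F, u k a = g a) :
    DenseRange u := by
  refine dense_iff_inter_open.2 fun s hs ⟨g, hg⟩ ↦ ?_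
  obtain ⟨F, v, hv, hvs⟩ := isOpen_pi_iff.1 hs g hg
  obtain ⟨k, hk⟩ := hu F g
  exact ⟨u k, hvs fun a ha ↦ by simpa only [hk a ha] using (hv a ha).2, k, rfl⟩

theorem separableSpace_pi_nat_of_injective {f : ι → ℕ → Bool} (hf : Function.Injective f) :
    SeparableSpace (ι → ℕ) := by
  let u (k : Σ m : ℕ, (Fin m → Bool) → ℕ) (a : ι) : ℕ := k.2 fun i ↦ f a i
  refine ⟨range u, countable_range u, denseRange_of_forall_finset_eqOn fun F g ↦ ?_⟩
  obtain ⟨m, hm⟩ := (eventually_injOn_restrict hf F).exists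
  have hinj : Function.Injective fun (a : F) (i : Fin m) ↦ f a i := hm.injective
  exact ⟨⟨m, Function.extend (fun (a : F) (i : Fin m) ↦ f a i) (fun a ↦ g a) 0⟩,
    fun a ha ↦ hinj.extend_apply (fun a ↦ g a) 0 ⟨a, ha⟩⟩

/-- The Hewitt–Marczewski–Pondiczery theorem for at most continuum many factors. -/
theorem separableSpace_pi_of_injective {f : ι → ℕ → Bool} (hf : Function.Injective f)
    (Y : ι → Type*) [∀ a, TopologicalSpace (Y a)] [∀ a, Nonempty (Y a)]
    [∀ a, SeparableSpace (Y a)] : SeparableSpace (∀ a, Y a) :=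
  have := separableSpace_pi_nat_of_injective hf
  (DenseRange.piMap fun a ↦ denseRange_denseSeq (Y a)).separableSpace <|
    Continuous.piMap fun _ ↦ continuous_of_discreteTopology

end SeparableProduct

section Kunen

variable {ι : Type*} [MeasurableSpace ι]

theorem discreteMeasurableSpace_prod_of_injective [DiscreteMeasurableSpace (ι × ι)]
    {α β : Type*} [MeasurableSpace α] [DiscreteMeasurableSpace α]
    [MeasurableSpace β] [DiscreteMeasurableSpace β] {f : α → ι} {g : β → ι}
    (hf : Function.Injective f) (hg : Function.Injective g) :
    DiscreteMeasurableSpace (α × β) where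
  forall_measurableSet s := by
    have hfg : Measurable (Prod.map f g) := Measurable.of_discrete.prodMap .of_discrete
    rw [← (hf.prodMap hg).preimage_image s]
    exact hfg (.of_discrete)

theorem discreteMeasurableSpace_prod_list [DiscreteMeasurableSpace ι]
    [DiscreteMeasurableSpace (ι × ι)] [MeasurableSpace (List ι)]
    [DiscreteMeasurableSpace (List ι)] : DiscreteMeasurableSpace (ι × List ι) := by
  rcases finite_or_infinite ι with _ | _
  · infer_instance
  · obtain ⟨e⟩ := Cardinal.eq.1 (Cardinal.mk_list_eq_mk ι)
    exact discreteMeasurableSpace_prod_of_injective Function.injective_id e.injective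

theorem IsKunen.discreteMeasurableSpace_prod [DiscreteMeasurableSpace ι] (h : IsKunen ι) :
    DiscreteMeasurableSpace (ι × ι) where
  forall_measurableSet s := by
    have hle : productSigma ι ≤ Prod.instMeasurableSpace := by
      refine MeasurableSpace.generateFrom_le ?_
      rintro _ ⟨A, B, rfl⟩
      exact .prod .of_discrete .of_discrete
    exact hle s (h ▸ MeasurableSpace.measurableSet_top)

theorem exists_injective_nat_bool_of_discreteMeasurableSpace_prod
    [DiscreteMeasurableSpace (ι × ι)] : ∃ f : ι → ℕ → Bool, Function.Injective f := by
  have : MeasurableEq ι := ⟨.of_discrete⟩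
  have := countablySeparated_of_measurableEq ι
  obtain ⟨f, -, hf⟩ := MeasurableSpace.measurable_injection_nat_bool_of_countablySeparated ι
  exact ⟨f, hf⟩

end Kunen

section KernelSupport

variable {Z α β : Type*} [MeasurableSpace Z] [MeasurableSpace α] [MeasurableSpace β]

/-- `R` is the support of an s-finite kernel `κ` from `Z` to `α` in the sense that the `κ z`-null
sets are exactly the sets missing `R z`. Projections along such an `R` of measurable subsets of
`Z × α` are measurable, although the sets `R z` may be uncountable in total. -/
def IsKernelSupport (R : Z → Set α) : Prop :=
  ∃ κ : Kernel Z α, IsSFiniteKernel κ ∧ ∀ z s, κ z s = 0 ↔ Disjoint (R z) s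

namespace IsKernelSupport

theorem measurableSet_exists {R : Z → Set α} (hR : IsKernelSupport R) {T : Set (Z × α)}
    (hT : MeasurableSet T) : MeasurableSet {z | ∃ a ∈ R z, (z, a) ∈ T} := by
  obtain ⟨κ, _, hκ⟩ := hR
  have hnull : {z | ∃ a ∈ R z, (z, a) ∈ T} = (fun z ↦ κ z (Prod.mk z ⁻¹' T)) ⁻¹' {0}ᶜ := by
    ext z
    simp [hκ, not_disjoint_iff]
  rw [hnull]
  exact Kernel.measurable_kernel_prodMk_left hT (measurableSet_singleton 0).compl

theorem const_singleton [DiscreteMeasurableSpace α] (a : α) :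
    IsKernelSupport fun _ : Z ↦ {a} :=
  ⟨Kernel.const Z (Measure.dirac a), inferInstance, fun z s ↦ by simp⟩

theorem image [DiscreteMeasurableSpace α] [DiscreteMeasurableSpace β] {R : Z → Set α}
    (hR : IsKernelSupport R) (f : α → β) : IsKernelSupport fun z ↦ f '' R z := by
  obtain ⟨κ, _, hκ⟩ := hR
  refine ⟨κ.map f, inferInstance, fun z s ↦ ?_⟩
  rw [Kernel.map_apply' κ .of_discrete z .of_discrete, hκ, disjoint_image_left]

theorem iUnion [DiscreteMeasurableSpace α] {K : Type*} [Countable K] {R : K → Z → Set α}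
    (hR : ∀ k, IsKernelSupport (R k)) : IsKernelSupport fun z ↦ ⋃ k, R k z := by
  choose κ _ hκ using hR
  refine ⟨Kernel.sum κ, inferInstance, fun z s ↦ ?_⟩
  simp [Kernel.sum_apply' κ z .of_discrete, hκ]

theorem prod [DiscreteMeasurableSpace α] [DiscreteMeasurableSpace (α × β)] {R : Z → Set α}
    {R' : Z → Set β} (hR : IsKernelSupport R) (hR' : IsKernelSupport R') :
    IsKernelSupport fun z ↦ R z ×ˢ R' z := by
  obtain ⟨κ, _, hκ⟩ := hR
  obtain ⟨η, _, hη⟩ := hR'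
  refine ⟨κ ×ₖ η, inferInstance, fun z s ↦ ?_⟩
  rw [Kernel.prod_apply' κ η z .of_discrete, lintegral_eq_zero_iff .of_discrete,
    Filter.EventuallyEq, ae_iff, hκ]
  simp only [disjoint_left, mem_prod, Prod.forall, Pi.zero_apply, mem_ofPred_eq, hη, mem_preimage]
  grind

theorem list [DiscreteMeasurableSpace α] [MeasurableSpace (List α)]
    [DiscreteMeasurableSpace (List α)] [DiscreteMeasurableSpace (α × List α)] {R : Z → Set α}
    (hR : IsKernelSupport R) : IsKernelSupport fun z ↦ {l : List α | ∀ a ∈ l, a ∈ R z} := by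
  have hlength (n : ℕ) :
      IsKernelSupport fun z ↦ {l : List α | l.length = n ∧ ∀ a ∈ l, a ∈ R z} := by
    induction n with
    | zero =>
      convert const_singleton (Z := Z) ([] : List α) using 2
      ext l
      simp +contextual
    | succ n ih =>
      convert (hR.prod ih).image fun p ↦ p.1 :: p.2 using 2 with z
      ext (_ | ⟨a, l⟩) <;> simp
      grind
  convert iUnion hlength using 2
  ext l
  simp

-- For open `U`, `edist (f z) (v k a) < infEDist (v k a) Uᶜ` forces `f z ∈ U`, and conversely holds
-- for every `v k a` close enough to a point `f z` of `U`.
theorem measurable_of_mem_closure [DiscreteMeasurableSpace α] {E K : Type*} [PseudoEMetricSpace E]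
    [Countable K] {R : Z → Set α} (hR : IsKernelSupport R) {f : Z → E} {v : K → α → E}
    (hdist : ∀ k, Measurable fun p : Z × α ↦ edist (f p.1) (v k p.2))
    (hf : ∀ z, f z ∈ closure (⋃ k, v k '' R z)) : Measurable[_, borel E] f := by
  refine measurable_generateFrom fun U hU ↦ ?_
  have hclosed : IsClosed Uᶜ := IsOpen.isClosed_compl hU
  have hpre : f ⁻¹' U = ⋃ k, {z | ∃ a ∈ R z, (z, a) ∈
      {p : Z × α | edist (f p.1) (v k p.2) < Metric.infEDist (v k p.2) Uᶜ}} := by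
    ext z
    simp only [mem_preimage, mem_iUnion, mem_ofPred_eq]
    constructor
    · intro hz
      have hpos : Metric.infEDist (f z) Uᶜ ≠ 0 := fun h ↦
        (Metric.mem_iff_infEDist_zero_of_closed hclosed).2 h hz
      obtain ⟨_, hy, hlt⟩ := EMetric.mem_closure_iff.1 (hf z) _ (ENNReal.half_pos hpos)
      obtain ⟨k, a, ha, rfl⟩ := mem_iUnion.1 hy
      refine ⟨k, a, ha, lt_of_not_ge fun hle ↦ ?_⟩
      have := calc
        Metric.infEDist (f z) Uᶜ ≤ Metric.infEDist (v k a) Uᶜ + edist (f z) (v k a) :=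
          Metric.infEDist_le_infEDist_add_edist
        _ ≤ edist (f z) (v k a) + edist (f z) (v k a) := by gcongr
        _ < Metric.infEDist (f z) Uᶜ / 2 + Metric.infEDist (f z) Uᶜ / 2 :=
          ENNReal.add_lt_add hlt hlt
        _ = Metric.infEDist (f z) Uᶜ := ENNReal.add_halves _
      exact this.false
    · rintro ⟨k, a, -, hlt⟩
      by_contra hz
      exact hlt.not_ge (edist_comm (f z) _ ▸ Metric.infEDist_le_edist_of_mem hz)
  rw [hpre]
  refine .iUnion fun k ↦ hR.measurableSet_exists (measurableSet_lt (hdist k) ?_)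
  exact (Measurable.of_discrete (f := fun a ↦ Metric.infEDist (v k a) Uᶜ)).comp measurable_snd

end IsKernelSupport

end KernelSupport

section ScalarMeasurability

variable {Z E : Type*} [MeasurableSpace Z] [NormedAddCommGroup E] [NormedSpace ℝ E]

/-- A vector-valued function is scalarly measurable if its composition with every continuous
linear functional is measurable, i.e. if it is measurable with respect to `BaW E`. -/
def ScalarlyMeasurable (f : Z → E) : Prop :=
  ∀ φ : StrongDual ℝ E, Measurable fun z ↦ φ (f z)

theorem scalarlyMeasurable_id_baW : @ScalarlyMeasurable E E (BaW E) _ _ id := fun φ ↦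
  measurable_iff_comap_le.2 <|
    le_iSup (fun φ : E →L[ℝ] ℝ ↦ MeasurableSpace.comap φ Real.measurableSpace) φ

theorem baW_le_borel : BaW E ≤ borel E :=
  iSup_le fun φ ↦ by
    rw [← measurable_iff_comap_le, BorelSpace.measurable_eq (α := ℝ)]
    exact φ.continuous.borel_measurable

namespace ScalarlyMeasurable

theorem of_discrete [DiscreteMeasurableSpace Z] (f : Z → E) : ScalarlyMeasurable f :=
  fun _ ↦ .of_discrete

variable {f g : Z → E}

theorem comp {W : Type*} [MeasurableSpace W] (hf : ScalarlyMeasurable f) {u : W → Z}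
    (hu : Measurable u) : ScalarlyMeasurable fun w ↦ f (u w) :=
  fun φ ↦ (hf φ).comp hu

theorem clm_apply {F : Type*} [NormedAddCommGroup F] [NormedSpace ℝ F] (T : E →L[ℝ] F)
    (hf : ScalarlyMeasurable f) : ScalarlyMeasurable fun z ↦ T (f z) :=
  fun φ ↦ hf (φ ∘L T)

theorem sub (hf : ScalarlyMeasurable f) (hg : ScalarlyMeasurable g) :
    ScalarlyMeasurable fun z ↦ f z - g z :=
  fun φ ↦ by
    simp only [map_sub]
    exact (hf φ).sub (hg φ)

theorem smul {c : Z → ℝ} (hc : Measurable c) (hf : ScalarlyMeasurable f) :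
    ScalarlyMeasurable fun z ↦ c z • f z :=
  fun φ ↦ by
    simp only [map_smul, smul_eq_mul]
    exact hc.mul (hf φ)

end ScalarlyMeasurable

end ScalarMeasurability

section Norming

variable {E : Type*} [NormedAddCommGroup E] [NormedSpace ℝ E]

/-- A family of functionals is norming if the norm is its pointwise supremum. The supremum is
encoded by `IsLUB`, which also bounds every functional by the norm. -/
def IsNorming {K : Type*} (φ : K → StrongDual ℝ E) : Prop :=
  ∀ x, IsLUB (range fun k ↦ φ k x) ‖x‖

namespace IsNorming

variable {K : Type*} {φ : K → StrongDual ℝ E}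

theorem apply_le_norm (hφ : IsNorming φ) (k : K) (x : E) : φ k x ≤ ‖x‖ :=
  (hφ x).1 ⟨k, rfl⟩

theorem norm_le_one (hφ : IsNorming φ) (k : K) : ‖φ k‖ ≤ 1 := by
  refine (φ k).opNorm_le_bound zero_le_one fun x ↦ ?_
  rw [one_mul, Real.norm_eq_abs, abs_le']
  exact ⟨hφ.apply_le_norm k x, by simpa using hφ.apply_le_norm k (-x)⟩

theorem exists_mul_norm_le (hφ : IsNorming φ) {c : ℝ} (hc : c < 1) (x : E) :
    ∃ k, c * ‖x‖ ≤ φ k x := by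
  rcases eq_or_ne x 0 with rfl | hx
  · obtain ⟨_, ⟨k, -⟩, -⟩ := (lt_isLUB_iff (hφ 0)).1 (sub_one_lt ‖(0 : E)‖)
    exact ⟨k, by simp⟩
  · obtain ⟨_, ⟨k, rfl⟩, hk⟩ :=
      (lt_isLUB_iff (hφ x)).1 (mul_lt_of_lt_one_left (norm_pos_iff.2 hx) hc)
    exact ⟨k, hk.le⟩

theorem comp_denseRange [TopologicalSpace K] (hφ : IsNorming φ)
    (hcont : ∀ x, Continuous fun k ↦ φ k x) {D : Type*} {d : D → K} (hd : DenseRange d) :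
    IsNorming (φ ∘ d) := by
  refine fun x ↦ ⟨forall_mem_range.2 fun n ↦ hφ.apply_le_norm (d n) x, fun b hb ↦ (hφ x).2 ?_⟩
  have hclosed : IsClosed {k | φ k x ≤ b} := isClosed_le (hcont x) continuous_const
  exact forall_mem_range.2 fun k ↦ hd.induction_on k hclosed fun n ↦ hb ⟨n, rfl⟩

theorem measurable_norm [Countable K] (hφ : IsNorming φ) {Z : Type*} [MeasurableSpace Z]
    {f : Z → E} (hf : ScalarlyMeasurable f) : Measurable fun z ↦ ‖f z‖ :=
  .isLUB (fun k ↦ hf (φ k)) fun z ↦ hφ (f z)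

end IsNorming

theorem exists_isNorming_nat (E : Type*) [NormedAddCommGroup E] [NormedSpace ℝ E]
    [SeparableSpace E] : ∃ φ : ℕ → StrongDual ℝ E, IsNorming φ := by
  choose φ hφ hφd using fun n ↦ exists_dual_vector'' ℝ (denseSeq E n)
  have hle (n : ℕ) (x : E) : φ n x ≤ ‖x‖ :=
    (le_abs_self _).trans (by simpa using (φ n).le_of_opNorm_le (hφ n) x)
  refine ⟨φ, fun x ↦ ⟨forall_mem_range.2 fun n ↦ hle n x, fun b hb ↦ ?_⟩⟩
  refine le_of_forall_pos_le_add fun ε hε ↦ ?_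
  obtain ⟨n, hn⟩ := (denseRange_denseSeq E).exists_dist_lt x (half_pos hε)
  set d := denseSeq E n
  rw [dist_eq_norm] at hn
  calc
    ‖x‖ ≤ ‖d‖ + ‖x - d‖ := norm_le_norm_add_norm_sub' x d
    _ = φ n x + φ n (d - x) + ‖x - d‖ := by simp [d, hφd]
    _ ≤ b + ‖x - d‖ + ‖x - d‖ := by
      gcongr
      · exact hb ⟨n, rfl⟩
      · exact norm_sub_rev d x ▸ hle n (d - x)
    _ ≤ b + ε := by linarith

end Norming

section EllOne

variable {ι : Type*} {X : ι → Type*} [∀ a, NormedAddCommGroup (X a)]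

theorem hasSum_norm_lp_one (x : lp X 1) : HasSum (fun a ↦ ‖x a‖) ‖x‖ := by
  simpa using lp.hasSum_norm (p := 1) (by simp) x

theorem enorm_lp_one_eq_tsum (x : lp X 1) : ‖x‖ₑ = ∑' a, ‖x a‖ₑ := by
  simp only [← ofReal_norm, ← (hasSum_norm_lp_one x).tsum_eq]
  exact ENNReal.ofReal_tsum_of_nonneg (fun _ ↦ norm_nonneg _) (hasSum_norm_lp_one x).summable

theorem mem_closure_iUnion_sum_single [DecidableEq ι] {K : Type*} {d : K → ∀ a, X a}
    (hd : DenseRange d) (x : lp X 1) :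
    x ∈ closure (⋃ k, (fun l : List ι ↦ (l.map fun a ↦ lp.single 1 a (d k a)).sum) ''
      {l | ∀ a ∈ l, x a ≠ 0}) := by
  classical
  refine isClosed_closure.mem_of_tendsto (lp.hasSum_single ENNReal.one_ne_top x)
    (.of_forall fun F ↦ ?_)
  set F' := F.filter (x · ≠ 0)
  have hF' : ∑ a ∈ F, lp.single 1 a (x a) = ∑ a ∈ F', lp.single 1 a (x a) := by
    refine (Finset.sum_filter_of_ne (p := (x · ≠ 0)) fun a _ ha hxa ↦ ha ?_).symm
    rw [hxa, lp.single_zero]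
  have hcont : Continuous fun w : ∀ a, X a ↦ ∑ a ∈ F', lp.single (E := X) 1 a (w a) :=
    continuous_finsetSum _ fun a _ ↦ (lp.isometry_single a).continuous.comp (continuous_apply a)
  rw [hF']
  refine map_mem_closure (f := fun w ↦ ∑ a ∈ F', lp.single 1 a (w a)) hcont (hd _)
    (forall_mem_range.2 fun k ↦ ?_)
  exact mem_iUnion.2 ⟨k, F'.toList, by simp [F'], Finset.sum_map_toList _ _⟩

variable [∀ a, NormedSpace ℝ (X a)]

/-- The functional `x ↦ ∑' a, ψ a (x a)` on an `ℓ¹`-sum, for contractive `ψ a`. It is how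
functionals on the summands are assembled into a norming family. -/
noncomputable def lpOneDual (ψ : ∀ a, StrongDual ℝ (X a)) (hψ : ∀ a, ‖ψ a‖ ≤ 1) :
    StrongDual ℝ (lp X 1) :=
  lp.tsumCLM ℝ ι ℝ ∘L lp.mapCLM 1 ψ zero_le_one hψ

open Classical in
/-- The projection of an `ℓ¹`-sum onto the coordinates in `A`; its norm at `x` is the mass of `A`
under the measure with density `‖x a‖`. -/
noncomputable def lpOneProj (A : Set ι) : lp X 1 →L[ℝ] lp X 1 :=
  lp.mapCLM 1 (fun a ↦ if a ∈ A then .id ℝ (X a) else 0) zero_le_one fun a ↦ by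
    split_ifs
    · exact ContinuousLinearMap.norm_id_le
    · simp

theorem enorm_lpOneProj (A : Set ι) (x : lp X 1) :
    ‖lpOneProj A x‖ₑ = ∑' a, A.indicator (fun a ↦ ‖x a‖ₑ) a := by
  rw [enorm_lp_one_eq_tsum]
  refine tsum_congr fun a ↦ ?_
  by_cases ha : a ∈ A <;> simp [lpOneProj, lp.mapCLM, ha]

theorem isNorming_lpOneDual {K : ι → Type*} {φ : ∀ a, K a → StrongDual ℝ (X a)}
    (hφ : ∀ a, IsNorming (φ a)) :
    IsNorming fun g : ∀ a, K a ↦ lpOneDual (fun a ↦ φ a (g a)) fun a ↦ (hφ a).norm_le_one _ := by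
  intro x
  have hsum (g : ∀ a, K a) : Summable fun a ↦ φ a (g a) (x a) :=
    .of_norm_bounded (hasSum_norm_lp_one x).summable fun a ↦ by
      simpa using (φ a (g a)).le_of_opNorm_le ((hφ a).norm_le_one _) (x a)
  refine ⟨forall_mem_range.2 fun g ↦ ?_, fun b hb ↦ ?_⟩
  · exact hasSum_le (fun a ↦ (hφ a).apply_le_norm _ _) (hsum g).hasSum (hasSum_norm_lp_one x)
  · have hscaled : ∀ c < 1, c * ‖x‖ ≤ b := fun c hc ↦ by
      choose g hg using fun a ↦ (hφ a).exists_mul_norm_le hc (x a)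
      exact (hasSum_le hg ((hasSum_norm_lp_one x).mul_left c) (hsum g).hasSum).trans (hb ⟨g, rfl⟩)
    have hlim : Filter.Tendsto (fun c ↦ c * ‖x‖) (𝓝[<] 1) (𝓝 ‖x‖) := by
      simpa using ((continuous_mul_const ‖x‖).tendsto 1).mono_left nhdsWithin_le_nhds
    exact le_of_tendsto hlim (eventually_nhdsWithin_of_forall hscaled)

theorem exists_isNorming_lp_one [∀ a, SeparableSpace (X a)] [SeparableSpace (ι → ℕ)] :
    ∃ φ : ℕ → StrongDual ℝ (lp X 1), IsNorming φ := by
  choose φ hφ using fun a ↦ exists_isNorming_nat (X a)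
  refine ⟨_, (isNorming_lpOneDual hφ).comp_denseRange (fun x ↦ ?_) (denseRange_denseSeq (ι → ℕ))⟩
  refine continuous_tsum (fun a ↦ ?_) (hasSum_norm_lp_one x).summable fun a g ↦ ?_
  · exact (continuous_of_discreteTopology (f := fun n ↦ φ a n (x a))).comp (continuous_apply a)
  · simpa using (φ a (g a)).le_of_opNorm_le ((hφ a).norm_le_one _) (x a)

variable {Z : Type*} [MeasurableSpace Z] {f : Z → lp X 1} {K : Type*} [Countable K]
  {φ : K → StrongDual ℝ (lp X 1)}

theorem IsNorming.isKernelSupport_ne_zero_of_norm_le_one [MeasurableSpace ι]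
    [DiscreteMeasurableSpace ι] (hφ : IsNorming φ) (hf : ScalarlyMeasurable f)
    (hle : ∀ z, ‖f z‖ ≤ 1) : IsKernelSupport fun z ↦ {a | f z a ≠ 0} := by
  let μ (z : Z) : Measure ι := Measure.count.withDensity fun a ↦ ‖f z a‖ₑ
  have hμ (z : Z) (A : Set ι) : μ z A = ‖lpOneProj A (f z)‖ₑ := by
    rw [withDensity_apply _ .of_discrete, ← lintegral_indicator .of_discrete, lintegral_count,
      enorm_lpOneProj]
  have hmeas : Measurable μ := Measure.measurable_of_measurable_coe _ fun A _ ↦ by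
    have hproj : Measurable fun z ↦ ‖lpOneProj A (f z)‖ :=
      hφ.measurable_norm (hf.clm_apply (lpOneProj A))
    simp only [hμ, ← ofReal_norm]
    exact hproj.ennreal_ofReal
  have hfin : IsFiniteKernel (⟨μ, hmeas⟩ : Kernel Z ι) := ⟨1, ENNReal.one_lt_top, fun z ↦ by
    change μ z univ ≤ 1
    rw [hμ, enorm_lpOneProj, indicator_univ, ← enorm_lp_one_eq_tsum, ← ofReal_norm,
      ENNReal.ofReal_le_one]
    exact hle z⟩
  refine ⟨⟨μ, hmeas⟩, inferInstance, fun z s ↦ ?_⟩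
  change μ z s = 0 ↔ _
  simp [μ, withDensity_apply_eq_zero, Measurable.of_discrete, disjoint_iff_inter_eq_empty]

theorem IsNorming.isKernelSupport_ne_zero [MeasurableSpace ι] [DiscreteMeasurableSpace ι]
    (hφ : IsNorming φ) (hf : ScalarlyMeasurable f) :
    IsKernelSupport fun z ↦ {a | f z a ≠ 0} := by
  -- Rescaling keeps the support of `f z` and makes the kernel finite.
  have hpos (z : Z) : 0 < 1 + ‖f z‖ := by positivity
  have hscaled : ScalarlyMeasurable fun z ↦ (1 + ‖f z‖)⁻¹ • f z :=
    hf.smul ((hφ.measurable_norm hf).const_add 1).inv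
  convert hφ.isKernelSupport_ne_zero_of_norm_le_one hscaled fun z ↦ ?_ using 4 with z a
  · simp [(hpos z).ne']
  · rw [norm_smul, norm_inv, Real.norm_of_nonneg (hpos z).le, inv_mul_le_one₀ (hpos z)]
    linarith

theorem ScalarlyMeasurable.measurable_borel [∀ a, SeparableSpace (X a)]
    [MeasurableSpace ι] [DiscreteMeasurableSpace ι] [DiscreteMeasurableSpace (ι × ι)]
    (hf : ScalarlyMeasurable f) : Measurable[_, borel (lp X 1)] f := by
  classical
  let : MeasurableSpace (List ι) := ⊤
  have := discreteMeasurableSpace_prod_list (ι := ι)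
  obtain ⟨e, he⟩ := exists_injective_nat_bool_of_discreteMeasurableSpace_prod (ι := ι)
  have := separableSpace_pi_nat_of_injective he
  have := separableSpace_pi_of_injective he X
  obtain ⟨φ, hφ⟩ := exists_isNorming_lp_one (X := X)
  refine (hφ.isKernelSupport_ne_zero hf).list.measurable_of_mem_closure (fun n ↦ ?_)
    fun z ↦ mem_closure_iUnion_sum_single (denseRange_denseSeq (∀ a, X a)) (f z)
  simp only [edist_dist, dist_eq_norm]
  refine (hφ.measurable_norm ((hf.comp measurable_fst).sub ?_)).ennreal_ofReal
  exact (ScalarlyMeasurable.of_discrete fun l : List ι ↦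
    (l.map fun a ↦ lp.single (E := X) 1 a (denseSeq (∀ a, X a) n a)).sum).comp measurable_snd

end EllOne

theorem stmt3_general (ι : Type*) (hκ : IsKunen ι) (X : ι → Type*)
    [∀ α, NormedAddCommGroup (X α)] [∀ α, NormedSpace ℝ (X α)]
    [∀ α, SeparableSpace (X α)] :
    BaW (lp X 1) = borel (lp X 1) := by
  let : MeasurableSpace ι := ⊤
  have := hκ.discreteMeasurableSpace_prod
  let : MeasurableSpace (lp X 1) := BaW (lp X 1)
  have hid : Measurable[BaW (lp X 1), borel (lp X 1)] id :=
    (scalarlyMeasurable_id_baW (E := lp X 1)).measurable_borel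
  exact baW_le_borel.antisymm (MeasurableSpace.comap_id.ge.trans hid.comap_le)

/-- If `κ = |ι|` is a Kunen cardinal and `(X α)_{α<κ}` is a family of separable Banach
spaces, then the ℓ¹-sum `X = (⊕_{α<κ} X α)_{ℓ¹}` satisfies `Ba(X_w) = Bo(X)`. -/
theorem stmt3 (ι : Type*) (hκ : IsKunen ι) (X : ι → Type*)
    [∀ α, NormedAddCommGroup (X α)] [∀ α, NormedSpace ℝ (X α)]
    [∀ α, CompleteSpace (X α)] [∀ α, TopologicalSpace.SeparableSpace (X α)] :
    BaW (lp X 1) = borel (lp X 1) := by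
  exact stmt3_general ι hκ X
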